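/- There exists a constant C > 0 such that the following holds (Procedure B, Case B of the CATERPILLAR algorithm): for every tree T=(V,E) with n vertices, every valid initial configuration A with |H| ≥ c(T), every pebble p̄ located at vertex r = A(p̄), and every target vertex t ≠ r, if the connected component of T − r containing t contains fewer than c(T) holes in configuration A, then there exists a plan f with |f| ≤ C·n·c(T) such that ρ(A,f)(p̄) = t. -/

import Mathlib

/-!
Outside the case of a path graph, write `c = c(T)`, so that `c₁ + 1 ≤ c` and `c₂ + 2 ≤ c`. Exactly
`c` holes are tracked, all other holes being treated like pebbles; `PMT.Reach` is the corresponding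
reachability relation. Holes can be moved freely inside a component of `T - x`, where `x` is the
position of the marked pebble: gathering `k` of them on prescribed vertices costs at most `k n`
moves (`PMT.Reach.gather`).

The core is the caterpillar motion `PMT.IsP.caterpillar`. Suppose that the marked pebble stands next
to a junction of the path it has to follow and that the next `c` vertices of this path are holes.
The next junction on the path is at distance at most `c - 2` from the previous one
(`PMT.next_junction`), hence the pebble can walk one vertex past it, free a neighbour of the
junction off the path, and withdraw there; the holes it left behind then overtake it
(`PMT.IsP.exchange`). The pebble is again next to a junction with `c` holes in front of it. An
exchange that advances by `d` vertices costs `O(c d)` moves, so the total cost is `O(c n)`.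

It remains to reach the starting position of this motion in a bounded number of gatherings, each of
at most `c n` moves. The corridor through the pebble has at most `c₁ + 1 ≤ c` vertices, one of them
being occupied by the pebble, so on some side of the pebble there are more holes than that side of
the corridor has vertices; then that side ends in a junction, to which the pebble can walk
(`PMT.IsP.toJunction`, `PMT.Reach.of_card`). From a junction with holes in two branches, the pebble retreats to a
neighbour off its path such that all holes are in front of it (`PMT.IsP.twoSteps`,
`PMT.Reach.of_junction`), and `PMT.IsP.launch` applies.

In a path graph `c₁ = n - 1`, so that all vertices other than that of the marked pebble are holes,
and the pebble simply walks to its target.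
-/

namespace PMT

variable {V P H : Type}

/-- A configuration assigns to each pebble or hole a vertex, bijectively. -/
abbrev Config (P H V : Type) : Type := (P ⊕ H) ≃ V

/- Apply a single move `u → v`: applicable iff `(u,v)` is an edge and the occupant of `v`
is a hole; applying it swaps the occupants of `u` and `v`. -/
open Classical in
noncomputable def applyMove (G : SimpleGraph V) (A : Config P H V) (m : V × V) :
    Option (Config P H V) :=
  if G.Adj m.1 m.2 ∧ (A.symm m.2).isRight = true then
    some (A.trans (Equiv.swap m.1 m.2))
  else
    none

/-- Apply a plan (finite list of moves) in order; defined (`some`) only when each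
successive move is applicable. -/
noncomputable def applyPlan (G : SimpleGraph V) :
    Config P H V → List (V × V) → Option (Config P H V)
  | A, [] => some A
  | A, m :: f => (applyMove G A m).bind fun B => applyPlan G B f

/-- The degree of a vertex (number of neighbors). -/
noncomputable def deg (G : SimpleGraph V) (v : V) : ℕ := (G.neighborSet v).ncard

/-- A corridor: a (nontrivial) path whose endpoints have degree different from 2 and
whose internal vertices all have degree exactly 2. -/
def IsCorridor (G : SimpleGraph V) {a b : V} (p : G.Walk a b) : Prop :=
  p.IsPath ∧ 1 ≤ p.length ∧ deg G a ≠ 2 ∧ deg G b ≠ 2 ∧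
    ∀ x ∈ p.support, x ≠ a → x ≠ b → deg G x = 2

/-- `c₁(T)`: the maximum length of a corridor. -/
noncomputable def c1 (G : SimpleGraph V) : ℕ :=
  sSup {n | ∃ (a b : V) (p : G.Walk a b), IsCorridor G p ∧ p.length = n}

/-- `c₂(T)`: the maximum length of a corridor both of whose endpoints are junctions
(vertices of degree greater than 2); `0` if no such corridor exists. -/
noncomputable def c2 (G : SimpleGraph V) : ℕ :=
  sSup {n | ∃ (a b : V) (p : G.Walk a b),
    IsCorridor G p ∧ 2 < deg G a ∧ 2 < deg G b ∧ p.length = n}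

/-- A path graph: all vertices lie on a single path. -/
def IsPathGraph (G : SimpleGraph V) : Prop :=
  ∃ (a b : V) (p : G.Walk a b), p.IsPath ∧ ∀ x : V, x ∈ p.support

/- The constant `c(T)`: `c₁(T)` if `T` is a path graph,
`max (c₁(T)+1) (c₂(T)+2)` otherwise. -/
open Classical in
noncomputable def cT (G : SimpleGraph V) : ℕ :=
  if IsPathGraph G then c1 G else max (c1 G + 1) (c2 G + 2)

/- The number of holes in the connected component of `T − r` containing `t`. -/
open Classical in
noncomputable def holesInComp (G : SimpleGraph V) [Fintype V]
    (A : Config P H V) (r t : V) : ℕ :=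
  (Finset.univ.filter fun x : V =>
    (∃ q : G.Walk x t, r ∉ q.support) ∧ (A.symm x).isRight = true).card

end PMT

/-! ### Moves that track a set of holes -/

namespace PMT

section Dynamics

variable {V P H : Type} {G : SimpleGraph V}

variable (P H G) in
/-- `Reach P H G k S x S' x'`: from every configuration with the marked pebble on `x` and holes on
all of `S`, at most `k` moves lead to a configuration with the marked pebble on `x'` and holes on
all of `S'`. Only the holes in `S` are tracked; any other hole may be treated like a pebble, which
is harmless because a move only asks its destination to be a hole. -/
def Reach (k : ℕ) (S : Finset V) (x : V) (S' : Finset V) (x' : V) : Prop :=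
  ∀ (A : Config P H V) (pb : P), A (Sum.inl pb) = x → (∀ v ∈ S, (A.symm v).isRight = true) →
    ∃ (f : List (V × V)) (B : Config P H V), applyPlan G A f = some B ∧ f.length ≤ k ∧
      B (Sum.inl pb) = x' ∧ ∀ v ∈ S', (B.symm v).isRight = true

theorem applyPlan_append (A : Config P H V) (f g : List (V × V)) :
    applyPlan G A (f ++ g) = (applyPlan G A f).bind fun B => applyPlan G B g := by
  induction f generalizing A with
  | nil => simp [applyPlan]
  | cons m f ih =>
    simp only [List.cons_append, applyPlan]
    cases applyMove G A m with
    | none => rfl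
    | some B => simp [ih]

theorem Reach.drop {k : ℕ} {S S' : Finset V} {x : V} (h : S' ⊆ S) : Reach P H G k S x S' x :=
  fun A _ hx hS => ⟨[], A, rfl, Nat.zero_le _, hx, fun v hv => hS v (h hv)⟩

theorem Reach.trans {k l : ℕ} {S S' S'' : Finset V} {x x' x'' : V}
    (h : Reach P H G k S x S' x') (h' : Reach P H G l S' x' S'' x'') :
    Reach P H G (k + l) S x S'' x'' := by
  intro A pb hx hS
  obtain ⟨f, B, hf, hk, hx', hS'⟩ := h A pb hx hS
  obtain ⟨g, D, hg, hl, hx'', hS''⟩ := h' B pb hx' hS'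
  refine ⟨f ++ g, D, ?_, ?_, hx'', hS''⟩
  · rw [applyPlan_append, hf]; exact hg
  · simp; omega

theorem Reach.mono {k l : ℕ} {S T S' T' : Finset V} {x x' : V}
    (h : Reach P H G k S x S' x') (hk : k ≤ l) (hS : S ⊆ T) (hT : T' ⊆ S') :
    Reach P H G l T x T' x' := by
  intro A pb hx hA
  obtain ⟨f, B, hf, hl, hx', hS'⟩ := h A pb hx (fun v hv => hA v (hS hv))
  exact ⟨f, B, hf, hl.trans hk, hx', fun v hv => hS' v (hT hv)⟩

/-- `Conn G x a b`: the vertices `a` and `b` lie in the same component of `T - x`. -/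
def Conn (G : SimpleGraph V) (x a b : V) : Prop := ∃ p : G.Walk a b, x ∉ p.support

theorem Conn.refl {x a : V} (h : a ≠ x) : Conn G x a a := ⟨.nil, by simpa using h.symm⟩

theorem Conn.symm {x a b : V} (h : Conn G x a b) : Conn G x b a := by
  obtain ⟨p, hp⟩ := h
  exact ⟨p.reverse, by simpa using hp⟩

theorem Conn.trans {x a b d : V} (h : Conn G x a b) (h' : Conn G x b d) : Conn G x a d := by
  obtain ⟨p, hp⟩ := h
  obtain ⟨q, hq⟩ := h'
  exact ⟨p.append q, by simp [SimpleGraph.Walk.mem_support_append_iff, hp, hq]⟩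

theorem Conn.of_adj {x a b : V} (h : G.Adj a b) (ha : a ≠ x) (hb : b ≠ x) : Conn G x a b :=
  ⟨.cons h .nil, by simp [ha.symm, hb.symm]⟩

theorem Conn.ne_left {x a b : V} (h : Conn G x a b) : a ≠ x := by
  obtain ⟨p, hp⟩ := h
  exact fun e => hp (e ▸ p.start_mem_support)

theorem Conn.ne_right {x a b : V} (h : Conn G x a b) : b ≠ x := h.symm.ne_left

variable [DecidableEq V]

/-- Moving an occupant other than the marked pebble from `u` into the hole `v`. -/
theorem Reach.other {S : Finset V} {x u v : V} (ha : G.Adj u v) (hv : v ∈ S) (hu : u ≠ x) :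
    Reach P H G 1 S x (insert u (S.erase v)) x := by
  classical
  intro A pb hx hS
  refine ⟨[(u, v)], A.trans (Equiv.swap u v), ?_, le_rfl, ?_, ?_⟩
  · simp only [applyPlan, applyMove]
    rw [if_pos ⟨ha, hS v hv⟩]
    simp only [Option.bind_some, Option.some.injEq]
    congr!
  · have : x ≠ v := by
      rintro rfl
      have := hS x hv
      rw [← hx] at this
      simp at this
    simp [hx, Equiv.swap_apply_of_ne_of_ne hu.symm this]
  · intro w hw
    have h1 : (A.trans (Equiv.swap u v)).symm w = A.symm (Equiv.swap u v w) := by simp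
    rw [h1]
    rcases eq_or_ne w u with rfl | hwu
    · simpa using hS v hv
    · have hw' : w ≠ v ∧ w ∈ S := by simpa [hwu] using hw
      rw [Equiv.swap_apply_of_ne_of_ne hwu hw'.1]
      exact hS w hw'.2

/-- Moving the marked pebble from `x` into the hole `v`. -/
theorem Reach.step {S : Finset V} {x v : V} (ha : G.Adj x v) (hv : v ∈ S) :
    Reach P H G 1 S x (insert x (S.erase v)) v := by
  classical
  intro A pb hx hS
  refine ⟨[(x, v)], A.trans (Equiv.swap x v), ?_, le_rfl, ?_, ?_⟩
  · simp only [applyPlan, applyMove]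
    rw [if_pos ⟨ha, hS v hv⟩]
    simp only [Option.bind_some, Option.some.injEq]
    congr!
  · simp [hx]
  · intro w hw
    have h1 : (A.trans (Equiv.swap x v)).symm w = A.symm (Equiv.swap x v w) := by simp
    rw [h1]
    rcases eq_or_ne w x with rfl | hwu
    · simpa using hS v hv
    · have hw' : w ≠ v ∧ w ∈ S := by simpa [hwu] using hw
      rw [Equiv.swap_apply_of_ne_of_ne hwu hw'.1]
      exact hS w hw'.2

/-- A hole at `a` can be exchanged for a hole at `b` along any walk avoiding the marked pebble,
leaving all other tracked holes in place: when the next vertex of the walk is a tracked hole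
already, that hole is first sent on to `b`, and the hole at `a` then takes its place. -/
theorem Reach.transfer {x a b : V} (p : G.Walk a b) (hx : x ∉ p.support) (S : Finset V)
    (ha : a ∈ S) (hb : b ∉ S) : Reach P H G p.length S x (insert b (S.erase a)) x := by
  induction p generalizing S with
  | nil => exact absurd ha hb
  | @cons a y b h q ih =>
    simp only [SimpleGraph.Walk.support_cons, List.mem_cons, not_or] at hx
    have hyx : y ≠ x := fun e => hx.2 (e ▸ q.start_mem_support)
    rw [SimpleGraph.Walk.length_cons]
    by_cases hy : y ∈ S
    · have h1 := ih hx.2 S hy hb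
      have hay : a ≠ y := h.ne
      have h2 : Reach P H G 1 (insert b (S.erase y)) x
          (insert y ((insert b (S.erase y)).erase a)) x :=
        Reach.other h.symm (by simp [ha, hay]) hyx
      refine (h1.trans h2).mono le_rfl subset_rfl ?_
      intro z hz
      have : b ≠ a := fun e => hb (e ▸ ha)
      simp only [Finset.mem_insert, Finset.mem_erase] at hz ⊢
      grind
    · have h1 : Reach P H G 1 S x (insert y (S.erase a)) x := Reach.other h.symm ha hyx
      by_cases hyb : y = b
      · subst hyb
        exact h1.mono (by omega) subset_rfl subset_rfl
      · have h2 := ih hx.2 (insert y (S.erase a)) (by simp) (by simp [hb, Ne.symm hyb])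
        refine (h1.trans h2).mono (by omega) subset_rfl ?_
        intro z hz
        simp only [Finset.mem_insert, Finset.mem_erase] at hz ⊢
        grind

variable [Fintype V]

theorem Reach.transfer' {x a b : V} (h : Conn G x a b) (S : Finset V)
    (ha : a ∈ S) (hb : b ∉ S) :
    Reach P H G (Fintype.card V) S x (insert b (S.erase a)) x := by
  obtain ⟨p, hp⟩ := h
  refine (Reach.transfer p.bypass (fun hx => hp (p.support_bypass_subset_support hx)) S ha hb).mono
    p.bypass_isPath.length_lt.le subset_rfl subset_rfl

/-- The holes of `S₀` are rearranged so as to occupy `Q`, while those of `R` stay in place. -/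
theorem Reach.gather {x : V} (R : Finset V) (k : ℕ) (S₀ Q : Finset V)
    (hk : (Q \ S₀).card = k) (hRS : Disjoint R S₀) (hRQ : Disjoint R Q) (hc : S₀.card = Q.card)
    (hw : ∀ a ∈ S₀, ∀ b ∈ Q, Conn G x a b) :
    Reach P H G (k * Fintype.card V) (R ∪ S₀) x (R ∪ Q) x := by
  induction k generalizing S₀ with
  | zero =>
    have h1 : Q ⊆ S₀ := by
      rw [Finset.card_eq_zero] at hk
      exact Finset.sdiff_eq_empty_iff_subset.mp hk
    exact Reach.drop (Finset.union_subset_union_right h1)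
  | succ k ih =>
    have h2 : (S₀ \ Q).card = k + 1 := by
      have e1 := Finset.card_sdiff_add_card_inter Q S₀
      have e2 := Finset.card_sdiff_add_card_inter S₀ Q
      rw [Finset.inter_comm] at e2
      omega
    obtain ⟨b, hb⟩ := Finset.card_pos.mp (show 0 < (Q \ S₀).card by omega)
    obtain ⟨a, ha⟩ := Finset.card_pos.mp (show 0 < (S₀ \ Q).card by omega)
    rw [Finset.mem_sdiff] at ha hb
    have hbR : b ∉ R := fun h => (Finset.disjoint_left.mp hRQ) h hb.1
    have h3 : Reach P H G (Fintype.card V) (R ∪ S₀) x (insert b ((R ∪ S₀).erase a)) x :=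
      Reach.transfer' (hw a ha.1 b hb.1) _ (by simp [ha.1]) (by simp [hbR, hb.2])
    have h4 := ih (insert b (S₀.erase a)) ?_ ?_ ?_ ?_
    · rw [add_mul, one_mul, add_comm]
      refine h3.trans (h4.mono le_rfl ?_ subset_rfl)
      have haR : a ∉ R := fun h => (Finset.disjoint_left.mp hRS) h ha.1
      intro z hz
      simp only [Finset.mem_union, Finset.mem_insert, Finset.mem_erase] at hz ⊢
      grind
    · have : Q \ insert b (S₀.erase a) = (Q \ S₀).erase b := by
        ext z
        simp only [Finset.mem_sdiff, Finset.mem_insert, Finset.mem_erase]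
        grind
      rw [this, Finset.card_erase_of_mem (by simp [hb.1, hb.2]), hk]
      rfl
    · rw [Finset.disjoint_insert_right]
      exact ⟨hbR, hRS.mono_right (Finset.erase_subset _ _)⟩
    · rw [Finset.card_insert_of_notMem (by simp [hb.2]), Finset.card_erase_of_mem ha.1, ← hc]
      have : 0 < S₀.card := Finset.card_pos.mpr ⟨a, ha.1⟩
      omega
    · intro a' ha' b' hb'
      simp only [Finset.mem_insert, Finset.mem_erase] at ha'
      rcases ha' with rfl | ha'
      · exact (hw a ha.1 a' hb.1).symm.trans (hw a ha.1 b' hb')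
      · exact hw a' ha'.2 b' hb'

/-- If all holes of `S` can reach `Q`, any `Q.card` of them can be placed on `Q`. -/
theorem Reach.gatherAll {x : V} (S Q : Finset V) (hc : Q.card ≤ S.card)
    (hw : ∀ a ∈ S, ∀ b ∈ Q, Conn G x a b) :
    Reach P H G (Q.card * Fintype.card V) S x Q x := by
  obtain ⟨S₀, hS₀, hc₀⟩ := Finset.exists_subset_card_eq hc
  have h := Reach.gather (P := P) (H := H) (∅ : Finset V) _ S₀ Q rfl (by simp) (by simp) hc₀
    (fun a ha b hb => hw a (hS₀ ha) b hb)
  simp only [Finset.empty_union] at h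
  exact h.mono (Nat.mul_le_mul_right _ (Finset.card_le_card Finset.sdiff_subset)) hS₀ subset_rfl

end Dynamics

end PMT

/-! ### Paths, branches and corridors in a tree -/

namespace PMT

section Paths

variable {V : Type} {G : SimpleGraph V}

/-- The vertices `u 0, …, u M` form a path of length `M` in `G`; the values of `u` beyond `M` play
no role. -/
structure IsP (G : SimpleGraph V) (u : ℕ → V) (M : ℕ) : Prop where
  adj : ∀ i < M, G.Adj (u i) (u (i + 1))
  inj : ∀ i j, i ≤ M → j ≤ M → u i = u j → i = j

theorem IsP.of_path {a b : V} {p : G.Walk a b} (hp : p.IsPath) : IsP G p.getVert p.length :=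
  ⟨fun _ hi => p.adj_getVert_succ hi, fun _ _ hi hj h => hp.getVert_injOn hi hj h⟩

theorem exists_isP (hG : G.IsTree) (a b : V) : ∃ u M, IsP G u M ∧ u 0 = a ∧ u M = b := by
  classical
  obtain ⟨p⟩ := hG.1.preconnected a b
  exact ⟨p.bypass.getVert, p.bypass.length, .of_path p.bypass_isPath, by simp, by simp⟩

theorem IsP.walk {u : ℕ → V} {M : ℕ} (h : IsP G u M) (a b : ℕ) (hab : a ≤ b) (hb : b ≤ M) :
    ∃ p : G.Walk (u a) (u b), p.IsPath ∧ p.length = b - a ∧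
      ∀ z ∈ p.support, ∃ i, a ≤ i ∧ i ≤ b ∧ u i = z := by
  induction b, hab using Nat.le_induction with
  | base => exact ⟨.nil, by simp, by simp, fun z hz => ⟨a, le_rfl, le_rfl, .symm (by simpa using hz)⟩⟩
  | succ b hab ih =>
    obtain ⟨p, hp, hl, hs⟩ := ih (by omega)
    refine ⟨p.concat (h.adj b (by omega)), hp.concat ?_ _, by simp [hl]; omega, ?_⟩
    · intro hm
      obtain ⟨i, h1, h2, h3⟩ := hs _ hm
      have := h.inj i (b + 1) (by omega) hb h3
      omega
    · intro z hz
      rw [SimpleGraph.Walk.support_concat, List.mem_append] at hz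
      rcases hz with hz | hz
      · obtain ⟨i, h1, h2, h3⟩ := hs _ hz
        exact ⟨i, h1, by omega, h3⟩
      · exact ⟨b + 1, by omega, le_rfl, .symm (by simpa using hz)⟩

/-- Vertices of a path in a tree are adjacent only if they are consecutive: otherwise the path
between them and the edge would be two different paths. -/
theorem IsP.adj_imp {u : ℕ → V} {M : ℕ} (h : IsP G u M) (hG : G.IsTree) {i j : ℕ} (hi : i ≤ M)
    (hj : j ≤ M) (ha : G.Adj (u i) (u j)) : j = i + 1 ∨ i = j + 1 := by
  wlog hij : i ≤ j generalizing i j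
  · exact (this hj hi ha.symm (by omega)).symm
  obtain ⟨p, hp, hl, -⟩ := h.walk i j hij hj
  have := (hG.2.subsingleton_path _ _).elim ⟨p, hp⟩ (SimpleGraph.Path.singleton ha)
  have h2 : p.length = 1 := by
    have e := congrArg (fun q : G.Path (u i) (u j) => (q : G.Walk (u i) (u j)).length) this
    simpa [SimpleGraph.Path.singleton] using e
  omega

theorem IsP.mono {u : ℕ → V} {M N : ℕ} (h : IsP G u M) (hN : N ≤ M) : IsP G u N :=
  ⟨fun i hi => h.adj i (by omega), fun i j hi hj => h.inj i j (by omega) (by omega)⟩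

theorem IsP.shift {u : ℕ → V} {M : ℕ} (h : IsP G u M) (k : ℕ) (hk : k ≤ M) :
    IsP G (fun i => u (i + k)) (M - k) := by
  refine ⟨fun i hi => ?_, fun i j hi hj e => ?_⟩
  · have := h.adj (i + k) (by omega)
    rwa [show i + k + 1 = i + 1 + k by omega] at this
  · have := h.inj (i + k) (j + k) (by omega) (by omega) e
    omega

theorem IsP.reverse {u : ℕ → V} {M : ℕ} (h : IsP G u M) : IsP G (fun i => u (M - i)) M := by
  refine ⟨fun i hi => ?_, fun i j hi hj e => ?_⟩
  · have := h.adj (M - (i + 1)) (by omega)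
    rw [show M - (i + 1) + 1 = M - i by omega] at this
    exact this.symm
  · have := h.inj (M - i) (M - j) (by omega) (by omega) e
    omega

/-- The sequence `w, u 0, u 1, …`. -/
def consP (w : V) (u : ℕ → V) (i : ℕ) : V := if i = 0 then w else u (i - 1)

@[simp] theorem consP_zero (w : V) (u : ℕ → V) : consP w u 0 = w := rfl

@[simp] theorem consP_succ (w : V) (u : ℕ → V) (i : ℕ) : consP w u (i + 1) = u i := rfl

theorem IsP.cons {u : ℕ → V} {M : ℕ} (h : IsP G u M) (hG : G.IsTree) {w : V}
    (ha : G.Adj w (u 0)) (hw : 1 ≤ M → w ≠ u 1) : IsP G (consP w u) (M + 1) := by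
  have hne : ∀ i ≤ M, w ≠ u i := by
    rintro i hi rfl
    rcases h.adj_imp hG hi (Nat.zero_le _) ha with h1 | h1
    · omega
    · subst h1
      exact hw hi rfl
  refine ⟨fun i hi => ?_, fun i j hi hj e => ?_⟩
  · rcases i with _ | i
    · exact ha
    · exact h.adj i (by omega)
  · rcases i with _ | i <;> rcases j with _ | j
    · rfl
    · exact absurd e (hne j (by omega))
    · exact absurd e.symm (hne i (by omega))
    · have := h.inj i j (by omega) (by omega) e
      omega

theorem IsP.snoc {u : ℕ → V} {M : ℕ} (h : IsP G u M) (hG : G.IsTree) {z : V} (hM : 1 ≤ M)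
    (ha : G.Adj (u M) z) (hz : z ≠ u (M - 1)) :
    IsP G (fun i => if i ≤ M then u i else z) (M + 1) := by
  have hne : ∀ i ≤ M, z ≠ u i := by
    rintro i hi rfl
    rcases h.adj_imp hG le_rfl hi ha with h1 | h1
    · omega
    · subst h1
      exact hz rfl
  refine ⟨fun i hi => ?_, fun i j hi hj e => ?_⟩
  · by_cases h1 : i + 1 ≤ M
    · simpa [h1, show i ≤ M by omega] using h.adj i (by omega)
    · obtain rfl : i = M := by omega
      simpa using ha
  · by_cases h1 : i ≤ M <;> by_cases h2 : j ≤ M <;> simp only [h1, h2, if_true, if_false] at e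
    · exact h.inj i j h1 h2 e
    · exact absurd e.symm (hne i h1)
    · exact absurd e (hne j h2)
    · omega

theorem IsP.conn {u : ℕ → V} {M : ℕ} (h : IsP G u M) {a b : ℕ} (ha : a ≤ M) (hb : b ≤ M) {x : V}
    (hx : ∀ i, a ⊓ b ≤ i → i ≤ a ⊔ b → u i ≠ x) : Conn G x (u a) (u b) := by
  wlog hab : a ≤ b generalizing a b
  · exact (this hb ha (by rwa [inf_comm, sup_comm]) (by omega)).symm
  obtain ⟨p, -, -, hs⟩ := h.walk a b hab hb
  refine ⟨p, fun hm => ?_⟩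
  obtain ⟨i, h1, h2, h3⟩ := hs _ hm
  exact hx i (by simp [hab, h1]) (by simp [hab, h2]) h3

/-- Each component of `G - x` contains at most one neighbour of `x`. -/
theorem adj_unique (hG : G.IsTree) {x y z : V} (hy : G.Adj x y) (hz : G.Adj x z)
    (h : Conn G x y z) : y = z := by
  classical
  obtain ⟨p, hp⟩ := h
  by_contra hne
  have hp' : x ∉ p.bypass.support := fun hx => hp (p.support_bypass_subset_support hx)
  have h1 : (SimpleGraph.Walk.cons hy p.bypass).IsPath :=
    (SimpleGraph.Walk.cons_isPath_iff _ _).mpr ⟨p.bypass_isPath, hp'⟩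
  have h2 := (hG.2.subsingleton_path _ _).elim ⟨_, h1⟩ (SimpleGraph.Path.singleton hz)
  have h3 : p.bypass.length + 1 = 1 := by
    have e := congrArg (fun q : G.Path x z => (q : G.Walk x z).length) h2
    simpa [SimpleGraph.Path.singleton] using e
  exact hne (SimpleGraph.Walk.eq_of_length_eq_zero (p := p.bypass) (by omega))

/-- Each component of `G - x` contains a neighbour of `x`. -/
theorem exists_branch (hG : G.IsTree) {x a : V} (h : a ≠ x) : ∃ y, G.Adj x y ∧ Conn G x y a := by
  obtain ⟨u, M, hu, h0, hM⟩ := exists_isP hG x a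
  have hM1 : 1 ≤ M := by
    rcases Nat.eq_zero_or_pos M with rfl | h1
    · exact absurd (hM.symm.trans h0) h
    · exact h1
  refine ⟨u 1, h0 ▸ hu.adj 0 (by omega), hM ▸ hu.conn hM1 le_rfl ?_⟩
  intro i hi _ e
  have := hu.inj i 0 (by omega) (by omega) (e.trans h0.symm)
  omega

/-- A pebble standing on the neighbour `y` of `J` does not separate `J` from the other branches
at `J`. -/
theorem conn_of_branch (hG : G.IsTree) {J y z a : V} (hy : G.Adj J y) (hz : G.Adj J z)
    (hyz : y ≠ z) (h : Conn G J z a) : Conn G y J a := by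
  classical
  obtain ⟨p, hp⟩ := h
  refine ⟨.cons hz p, ?_⟩
  simp only [SimpleGraph.Walk.support_cons, List.mem_cons, not_or]
  refine ⟨hy.ne', fun hm => hyz (adj_unique hG hz hy ?_).symm⟩
  exact ⟨p.takeUntil y hm, fun hx => hp (p.support_takeUntil_subset_support hm hx)⟩

section Degree

variable [Finite V]

theorem deg_pos_of_adj {v a : V} (h : G.Adj v a) : 1 ≤ deg G v :=
  Nat.one_le_iff_ne_zero.mpr (by rw [deg, Ne, Set.ncard_eq_zero]; exact Set.nonempty_iff_ne_empty.mp ⟨a, h⟩)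

theorem two_le_deg {v a b : V} (ha : G.Adj v a) (hb : G.Adj v b) (hab : a ≠ b) : 2 ≤ deg G v := by
  rw [deg, ← Set.ncard_pair hab]
  exact Set.ncard_le_ncard (by rintro z (rfl | rfl); exacts [ha, hb])

theorem eq_of_deg_two {v a b : V} (h : deg G v = 2) (ha : G.Adj v a) (hb : G.Adj v b)
    (hab : a ≠ b) {w : V} (hw : G.Adj v w) : w = a ∨ w = b := by
  have h1 : ({a, b} : Set V) = G.neighborSet v :=
    Set.eq_of_subset_of_ncard_le (by rintro z (rfl | rfl); exacts [ha, hb])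
      (by rw [Set.ncard_pair hab]; exact h.le)
  have : w ∈ ({a, b} : Set V) := h1 ▸ hw
  simpa using this

theorem exists_adj_ne {v : V} (h : 2 ≤ deg G v) (a : V) : ∃ w, G.Adj v w ∧ w ≠ a := by
  obtain ⟨w, hw, hwa⟩ := Set.exists_mem_notMem_of_ncard_lt_ncard (s := {a}) (t := G.neighborSet v)
    (by rw [Set.ncard_singleton]; exact h)
  exact ⟨w, hw, by simpa using hwa⟩

theorem exists_adj_ne_ne {v : V} (h : 2 < deg G v) (a b : V) :
    ∃ w, G.Adj v w ∧ w ≠ a ∧ w ≠ b := by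
  obtain ⟨w, hw, hwa⟩ := Set.exists_mem_notMem_of_ncard_lt_ncard (s := {a, b})
    (t := G.neighborSet v) ((Set.ncard_insert_le a {b}).trans_lt (by
      rw [Set.ncard_singleton]; exact h))
  exact ⟨w, hw, by simpa using hwa⟩

end Degree

theorem IsP.isCorridor {u : ℕ → V} {m : ℕ} (h : IsP G u m) (hm : 1 ≤ m) (h0 : deg G (u 0) ≠ 2)
    (hm2 : deg G (u m) ≠ 2) (hi : ∀ i, 0 < i → i < m → deg G (u i) = 2) :
    ∃ p : G.Walk (u 0) (u m), IsCorridor G p ∧ p.length = m := by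
  obtain ⟨p, hp, hl, hs⟩ := h.walk 0 m (Nat.zero_le _) le_rfl
  refine ⟨p, ⟨hp, by omega, h0, hm2, fun z hz hz0 hzm => ?_⟩, by omega⟩
  obtain ⟨i, -, h2, rfl⟩ := hs z hz
  refine hi i (Nat.pos_of_ne_zero ?_) (lt_of_le_of_ne h2 ?_)
  · rintro rfl; exact hz0 rfl
  · rintro rfl; exact hzm rfl

variable [Fintype V]

theorem IsP.lt_card {u : ℕ → V} {M : ℕ} (h : IsP G u M) : M < Fintype.card V := by
  obtain ⟨p, hp, hl, -⟩ := h.walk 0 M (Nat.zero_le _) le_rfl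
  have := hp.length_lt
  omega

theorem IsP.le_c1 {u : ℕ → V} {m : ℕ} (h : IsP G u m) (hm : 1 ≤ m) (h0 : deg G (u 0) ≠ 2)
    (hm2 : deg G (u m) ≠ 2) (hi : ∀ i, 0 < i → i < m → deg G (u i) = 2) : m ≤ c1 G := by
  refine le_csSup ⟨Fintype.card V, ?_⟩ ⟨_, _, h.isCorridor hm h0 hm2 hi⟩
  rintro _ ⟨a, b, p, hp, rfl⟩
  exact hp.1.length_lt.le

theorem IsP.le_c2 {u : ℕ → V} {m : ℕ} (h : IsP G u m) (hm : 1 ≤ m) (h0 : 2 < deg G (u 0))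
    (hm2 : 2 < deg G (u m)) (hi : ∀ i, 0 < i → i < m → deg G (u i) = 2) : m ≤ c2 G := by
  obtain ⟨p, hp, hl⟩ := h.isCorridor hm h0.ne' hm2.ne' hi
  refine le_csSup ⟨Fintype.card V, ?_⟩ ⟨_, _, p, hp, h0, hm2, hl⟩
  rintro _ ⟨a, b, p, hp, -, -, rfl⟩
  exact hp.1.length_lt.le

/-- A path with interior vertices of degree 2 can be prolonged, through vertices of degree 2, up to
a vertex whose degree is not 2. -/
theorem IsP.extend (hG : G.IsTree) {u : ℕ → V} {m : ℕ} (h : IsP G u m) (hm : 1 ≤ m)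
    (hi : ∀ i, 0 < i → i < m → deg G (u i) = 2) :
    ∃ u' m', m ≤ m' ∧ IsP G u' m' ∧ (∀ i ≤ m, u' i = u i) ∧ deg G (u' m') ≠ 2 ∧
      ∀ i, 0 < i → i < m' → deg G (u' i) = 2 := by
  induction hk : Fintype.card V - m generalizing u m with
  | zero =>
    have := h.lt_card
    omega
  | succ k ih =>
    by_cases hd : deg G (u m) = 2
    · obtain ⟨z, hz, hzm⟩ := exists_adj_ne hd.ge (u (m - 1))
      obtain ⟨u', m', h1, h2, h3, h4, h5⟩ := ih (h.snoc hG hm hz hzm) (by omega) (by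
        intro i hi0 him
        simp only [show i ≤ m by omega, if_true]
        rcases Nat.lt_or_ge i m with h' | h'
        · exact hi i hi0 h'
        · rwa [show i = m by omega]) (by omega)
      refine ⟨u', m', by omega, h2, fun i hi => ?_, h4, h5⟩
      rw [h3 i (by omega), if_pos hi]
    · exact ⟨u, m, le_rfl, h, fun _ _ => rfl, hd, hi⟩

/-- The distance from a junction on a long path to the next junction on it is at most `c - 2`:
a corridor between two junctions has length at most `c₂ ≤ c - 2`, and any corridor has length at
most `c₁ ≤ c - 1`. -/
theorem next_junction (hG : G.IsTree) {c : ℕ} (h1 : c1 G + 1 ≤ c) (h2 : c2 G + 2 ≤ c)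
    {u : ℕ → V} {M : ℕ} (h : IsP G u M) (hM : c < M) (hd : 2 < deg G (u 1)) :
    ∃ k, 2 ≤ k ∧ k + 1 ≤ c ∧ 2 < deg G (u k) := by
  by_contra! hcon
  have hge : ∀ i, 1 ≤ i → i < M → 2 ≤ deg G (u i) := by
    intro i hi hiM
    have ha := h.adj (i - 1) (by omega)
    rw [show i - 1 + 1 = i by omega] at ha
    refine two_le_deg ha.symm (h.adj i hiM) fun e => ?_
    have := h.inj (i - 1) (i + 1) (by omega) (by omega) e
    omega
  have h2d : ∀ i, 2 ≤ i → i + 1 ≤ c → deg G (u i) = 2 := fun i hi hic =>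
    le_antisymm (hcon i hi hic) (hge i (by omega) (by omega))
  have hs := h.shift 1 (by omega)
  -- either `u c` closes a corridor of length `c - 1` between junctions, or the corridor starting
  -- at `u 1` extends beyond it and has length at least `c`
  by_cases hc : 2 < deg G (u c)
  · have := (hs.mono (N := c - 1) (by omega)).le_c2 (by omega) hd
      (by simpa only [show c - 1 + 1 = c by omega] using hc)
      (fun i hi hic => h2d (i + 1) (by omega) (by omega))
    omega
  · have hc2 : deg G (u c) = 2 := le_antisymm (by omega) (hge c (by omega) hM)
    obtain ⟨u', m', g1, g2, g3, g4, g5⟩ := (hs.mono (N := c) (by omega)).extend hG (by omega) (by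
      intro i hi hic
      rcases Nat.lt_or_ge (i + 1) c with h' | h'
      · exact h2d (i + 1) (by omega) (by omega)
      · rwa [show i + 1 = c by omega])
    have := g2.le_c1 (by omega) (by rw [g3 0 (by omega)]; exact hd.ne') g4 g5
    omega

open Finset in
/-- In a path graph the whole path is a corridor, so `c₁ = n - 1`. -/
theorem card_le_c1_of_isPathGraph (hG : G.IsTree) (h : IsPathGraph G) (hn : 2 ≤ Fintype.card V) :
    Fintype.card V ≤ c1 G + 1 := by
  classical
  obtain ⟨a, b, p, hp, hall⟩ := h
  have hu := IsP.of_path hp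
  have hcard : Fintype.card V ≤ p.length + 1 := by
    have e1 : (univ : Finset V) ⊆ p.support.toFinset := fun x _ => by simpa using hall x
    have e2 := (card_le_card e1).trans (List.toFinset_card_le _)
    simpa using e2
  have hidx : ∀ x, ∃ j ≤ p.length, p.getVert j = x := fun x => by
    obtain ⟨j, e, hj⟩ := SimpleGraph.Walk.mem_support_iff_exists_getVert.mp (hall x)
    exact ⟨j, hj, e⟩
  have hone : ∀ i y, G.neighborSet (p.getVert i) ⊆ {y} → deg G (p.getVert i) ≠ 2 := by
    intro i y hs
    have := Set.ncard_le_ncard hs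
    rw [Set.ncard_singleton] at this
    rw [deg]
    omega
  have := hu.le_c1 (by omega) (hone _ (p.getVert 1) ?_) (hone _ (p.getVert (p.length - 1)) ?_) ?_
  · omega
  · intro x hx
    obtain ⟨j, hj, rfl⟩ := hidx x
    rcases hu.adj_imp hG (by omega) hj hx with h' | h'
    · simp [h']
    · omega
  · intro x hx
    obtain ⟨j, hj, rfl⟩ := hidx x
    rcases hu.adj_imp hG le_rfl hj hx with h' | h'
    · omega
    · rw [show j = p.length - 1 by omega]
      rfl
  · intro i hi0 him
    have ha := hu.adj (i - 1) (by omega)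
    rw [show i - 1 + 1 = i by omega] at ha
    refine le_antisymm ?_ (two_le_deg ha.symm (hu.adj i him) fun e => ?_)
    · have hs : G.neighborSet (p.getVert i) ⊆ {p.getVert (i - 1), p.getVert (i + 1)} := by
        intro x hx
        obtain ⟨j, hj, rfl⟩ := hidx x
        rcases hu.adj_imp hG him.le hj hx with h' | h'
        · simp [h']
        · simp [show j = i - 1 by omega]
      exact (Set.ncard_le_ncard hs).trans ((Set.ncard_insert_le _ _).trans (by
        rw [Set.ncard_singleton]))
    · have := hu.inj (i - 1) (i + 1) (by omega) (by omega) e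
      omega

end Paths

end PMT

/-! ### The caterpillar motion -/

namespace PMT

section Motion

open Finset

variable {V P H : Type} {G : SimpleGraph V} [DecidableEq V]

theorem IsP.reach {u : ℕ → V} {M : ℕ} (h : IsP G u M) (m : ℕ) (hm : m ≤ M) (S : Finset V)
    (hS : ∀ i, 1 ≤ i → i ≤ m → u i ∈ S) :
    Reach P H G m S (u 0) ((insert (u 0) S).erase (u m)) (u m) := by
  induction m with
  | zero => exact Reach.drop (erase_insert_subset _ _)
  | succ m ih =>
    have h1 := ih (by omega) (fun i hi him => hS i hi (by omega))
    have hne : u (m + 1) ≠ u m := (h.adj m (by omega)).ne'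
    have h2 : Reach P H G 1 ((insert (u 0) S).erase (u m)) (u m)
        (insert (u m) (((insert (u 0) S).erase (u m)).erase (u (m + 1)))) (u (m + 1)) :=
      Reach.step (h.adj m (by omega))
        (mem_erase.mpr ⟨hne, mem_insert_of_mem (hS _ (by omega) le_rfl)⟩)
    refine (h1.trans h2).mono le_rfl subset_rfl ?_
    intro z hz
    simp only [mem_insert, mem_erase] at hz ⊢
    grind

/-- With the marked pebble off the path, the first `m` holes of the path are sent past its `c`-th
vertex, each travelling `c + 1` edges. -/
theorem IsP.shiftHoles {u : ℕ → V} {M : ℕ} (h : IsP G u M) {x : V} (hx : ∀ i ≤ M, u i ≠ x)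
    {k c : ℕ} (hk : 1 ≤ k) (m : ℕ) (hm : m + 1 ≤ k) (hcm : c + m ≤ M) (hkc : k ≤ c) :
    Reach P H G (m * (c + 1)) ((range (k - 1) ∪ Icc k c).image u) x
      ((Ico m (k - 1) ∪ Icc k (c + m)).image u) x := by
  induction m with
  | zero =>
    refine Reach.mono (Reach.drop subset_rfl) le_rfl subset_rfl (image_subset_image ?_)
    intro i
    simp
  | succ m ih =>
    have h1 := ih (by omega) (by omega)
    obtain ⟨p, -, hl, hs⟩ := h.walk m (c + (m + 1)) (by omega) hcm
    have h2 := Reach.transfer (P := P) (H := H) (x := x) p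
      (fun hm => by
        obtain ⟨i, -, h5, h6⟩ := hs _ hm
        exact hx i (by omega) h6)
      ((Ico m (k - 1) ∪ Icc k (c + m)).image u)
      (mem_image_of_mem _ (by simp; omega))
      (fun hm => by
        obtain ⟨i, hi, e⟩ := mem_image.mp hm
        simp only [mem_union, mem_Ico, mem_Icc] at hi
        have := h.inj i (c + (m + 1)) (by omega) (by omega) e
        omega)
    refine (h1.trans h2).mono (le_of_eq ?_) subset_rfl ?_
    · rw [hl, show c + (m + 1) - m = c + 1 by omega]
      ring
    · refine image_subset_iff.mpr fun i hi => ?_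
      simp only [mem_union, mem_Ico, mem_Icc] at hi
      rw [mem_insert]
      rcases Nat.lt_or_ge i (c + (m + 1)) with h' | h'
      · refine .inr (mem_erase.mpr ⟨fun e => ?_, mem_image_of_mem _ ?_⟩)
        · have := h.inj i m (by omega) (by omega) e
          omega
        · simp only [mem_union, mem_Ico, mem_Icc]
          omega
      · exact .inl (by rw [show i = c + (m + 1) by omega])

/-- The junction exchange. The marked pebble stands at the beginning of a path whose next `c`
vertices are holes. It walks just past a junction `u k` of the path, a hole is placed on the
neighbour `w` of `u k` off the path, the pebble withdraws to `w`, and the holes left behind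
overtake it. This costs `O(c (k - 1))` moves. -/
theorem IsP.exchange (hG : G.IsTree) {c : ℕ} {u : ℕ → V} {M : ℕ} (h : IsP G u M) (hM : c < M)
    {k : ℕ} (hk : 2 ≤ k) (hkc : k + 1 ≤ c) {w : V} (hw : G.Adj (u k) w) (hw1 : w ≠ u (k - 1))
    (hw2 : w ≠ u (k + 1)) :
    Reach P H G (9 * c * (k - 1)) ((Icc 1 c).image u) (u 0)
      ((Icc k (min (c + (k - 1)) M)).image u) w := by
  have hne : ∀ i j, i ≤ M → j ≤ M → i ≠ j → u i ≠ u j := fun i j hi hj hij e =>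
    hij (h.inj i j hi hj e)
  have hwne : ∀ i ≤ M, u i ≠ w := by
    rintro i hi rfl
    rcases h.adj_imp hG (by omega) hi hw with rfl | h'
    · exact hw2 rfl
    · exact hw1 (by rw [h', Nat.add_sub_cancel])
  have hadj : G.Adj (u k) (u (k - 1)) := by
    have := h.adj (k - 1) (by omega)
    rw [show k - 1 + 1 = k by omega] at this
    exact this.symm
  have r1 : Reach P H G (k + 1) ((Icc 1 c).image u) (u 0)
      ((Icc 0 k ∪ Icc (k + 2) c).image u) (u (k + 1)) := by
    refine (h.reach (k + 1) (by omega) _ ?_).mono le_rfl subset_rfl ?_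
    · intro i hi hi'
      exact mem_image_of_mem _ (mem_Icc.mpr ⟨hi, by omega⟩)
    · refine image_subset_iff.mpr fun i hi => ?_
      simp only [mem_union, mem_Icc] at hi
      refine mem_erase.mpr ⟨hne _ _ (by omega) (by omega) (by omega), mem_insert.mpr ?_⟩
      rcases Nat.eq_zero_or_pos i with rfl | hi0
      · exact .inl rfl
      · exact .inr (mem_image_of_mem _ (mem_Icc.mpr ⟨hi0, by omega⟩))
  have r2 : Reach P H G 1 ((Icc 0 k ∪ Icc (k + 2) c).image u) (u (k + 1))
      (insert w ((range k ∪ Icc (k + 2) c).image u)) (u (k + 1)) := by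
    refine (Reach.other (u := w) (v := u k) hw.symm (mem_image_of_mem _ ?_)
      (hwne _ (by omega)).symm).mono le_rfl subset_rfl ?_
    · simp
    · refine insert_subset_insert _ (image_subset_iff.mpr fun i hi => ?_)
      simp only [mem_union, mem_Icc, mem_range] at hi
      exact mem_erase.mpr ⟨hne _ _ (by omega) (by omega) (by omega), mem_image_of_mem _ (by
        simp only [mem_union, mem_Icc]; omega)⟩
  have r3 : Reach P H G 1 (insert w ((range k ∪ Icc (k + 2) c).image u)) (u (k + 1))
      (insert w ((range (k - 1) ∪ insert k (Icc (k + 2) c)).image u)) (u (k + 1)) := by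
    refine (Reach.other (u := u k) (v := u (k - 1)) hadj
      (mem_insert_of_mem (mem_image_of_mem _ ?_))
      (hne _ _ (by omega) (by omega) (by omega))).mono le_rfl subset_rfl ?_
    · simp only [mem_union, mem_Icc, mem_range]; omega
    · refine insert_subset ?_ (image_subset_iff.mpr fun i hi => ?_)
      · exact mem_insert_of_mem (mem_erase.mpr ⟨hw1, mem_insert_self _ _⟩)
      · simp only [mem_union, mem_Icc, mem_range, mem_insert] at hi
        rcases eq_or_ne i k with rfl | hik
        · exact mem_insert_self _ _
        · exact mem_insert_of_mem (mem_erase.mpr ⟨hne _ _ (by omega) (by omega) (by omega),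
            mem_insert_of_mem (mem_image_of_mem _ (by
              simp only [mem_union, mem_Icc, mem_range]; omega))⟩)
  have r4 : Reach P H G 1 (insert w ((range (k - 1) ∪ insert k (Icc (k + 2) c)).image u))
      (u (k + 1)) (insert w ((range (k - 1) ∪ Icc (k + 1) c).image u)) (u k) := by
    refine (Reach.step (x := u (k + 1)) (v := u k) (h.adj k (by omega)).symm
      (mem_insert_of_mem (mem_image_of_mem _ ?_))).mono le_rfl subset_rfl ?_
    · simp
    · refine insert_subset ?_ (image_subset_iff.mpr fun i hi => ?_)
      · exact mem_insert_of_mem (mem_erase.mpr ⟨(hwne _ (by omega)).symm, mem_insert_self _ _⟩)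
      · simp only [mem_union, mem_Icc, mem_range] at hi
        rcases eq_or_ne i (k + 1) with rfl | hik
        · exact mem_insert_self _ _
        · exact mem_insert_of_mem (mem_erase.mpr ⟨hne _ _ (by omega) (by omega) (by omega),
            mem_insert_of_mem (mem_image_of_mem _ (by
              simp only [mem_union, mem_Icc, mem_range, mem_insert]; omega))⟩)
  have r5 : Reach P H G 1 (insert w ((range (k - 1) ∪ Icc (k + 1) c).image u)) (u k)
      ((range (k - 1) ∪ Icc k c).image u) w := by
    refine (Reach.step (x := u k) (v := w) hw (mem_insert_self _ _)).mono le_rfl subset_rfl ?_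
    refine image_subset_iff.mpr fun i hi => ?_
    simp only [mem_union, mem_Icc, mem_range] at hi
    rcases eq_or_ne i k with rfl | hik
    · exact mem_insert_self _ _
    · exact mem_insert_of_mem (mem_erase.mpr ⟨hwne _ (by omega),
        mem_insert_of_mem (mem_image_of_mem _ (by
          simp only [mem_union, mem_Icc, mem_range]; omega))⟩)
  have r6 := h.shiftHoles (P := P) (H := H) hwne (k := k) (c := c) (by omega)
    (min (k - 1) (M - c)) (by omega) (by omega) (by omega)
  refine (((((r1.trans r2).trans r3).trans r4).trans r5).trans r6).mono ?_ subset_rfl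
    (image_subset_image fun i hi => ?_)
  · have e1 : min (k - 1) (M - c) * (c + 1) ≤ (k - 1) * (c + 1) :=
      Nat.mul_le_mul_right _ (min_le_left _ _)
    obtain ⟨d, rfl⟩ : ∃ d, k = d + 2 := ⟨k - 2, by omega⟩
    rw [show d + 2 - 1 = d + 1 by omega] at e1 ⊢
    nlinarith [Nat.zero_le (d * c)]
  · simp only [mem_union, mem_Icc, mem_Ico] at hi ⊢
    omega

variable [Fintype V]

/-- The caterpillar motion: exchanges at consecutive junctions carry the marked pebble, together
with the `c` holes in front of it, along the whole path. The cost telescopes, since an exchange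
that advances by `k - 1` vertices costs `O(c (k - 1))` moves. -/
theorem IsP.caterpillar (hG : G.IsTree) {c : ℕ} (h1 : c1 G + 1 ≤ c) (h2 : c2 G + 2 ≤ c) (M : ℕ)
    {u : ℕ → V} (h : IsP G u M) (hM : 1 ≤ M) (hd : 2 < deg G (u 1)) :
    Reach P H G (9 * c * M) ((Icc 1 (min c M)).image u) (u 0) ∅ (u M) := by
  induction M using Nat.strong_induction_on generalizing u with
  | _ M ih =>
    rcases Nat.lt_or_ge c M with hcM | hcM
    · obtain ⟨k, hk, hkc, hdk⟩ := next_junction hG h1 h2 h hcM hd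
      obtain ⟨w, hw, hw1, hw2⟩ := exists_adj_ne_ne hdk (u (k - 1)) (u (k + 1))
      have r1 := h.exchange (P := P) (H := H) hG hcM hk hkc hw hw1 hw2
      have hp : IsP G (consP w fun i => u (i + k)) (M - k + 1) := by
        refine (h.shift k (by omega)).cons hG (by simpa using hw.symm) fun _ => ?_
        rwa [add_comm 1 k]
      have r2 := ih (M - k + 1) (by omega) hp (by omega) (by
        change 2 < deg G (u (0 + k))
        rwa [zero_add])
      have e : consP w (fun i => u (i + k)) (M - k + 1) = u M := by
        rw [consP_succ, Nat.sub_add_cancel (by omega)]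
      rw [e, consP_zero] at r2
      rw [min_eq_left hcM.le]
      refine (r1.trans (r2.mono le_rfl ?_ subset_rfl)).mono (le_of_eq ?_) subset_rfl subset_rfl
      · refine image_subset_iff.mpr fun i hi => ?_
        rw [mem_Icc] at hi
        obtain ⟨j, rfl⟩ : ∃ j, i = j + 1 := ⟨i - 1, by omega⟩
        exact mem_image_of_mem _ (mem_Icc.mpr (by omega))
      · rw [← mul_add]
        congr 1
        omega
    · rw [min_eq_right hcM]
      refine (h.reach M le_rfl _ fun i hi hi' => mem_image_of_mem _ (mem_Icc.mpr ⟨hi, hi'⟩)).mono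
        ?_ subset_rfl (by simp)
      have : 1 ≤ c := by omega
      nlinarith

/-- The marked pebble stands on a neighbour `w` of a junction `v 0`, all `c` holes can reach the
junction, and the path `v` to be followed does not start through `w`. The holes are lined up on the
path and the caterpillar motion then brings the pebble to its end. -/
theorem IsP.launch (hG : G.IsTree) {c : ℕ} (h1 : c1 G + 1 ≤ c) (h2 : c2 G + 2 ≤ c) {L : ℕ}
    {v : ℕ → V} (h : IsP G v L) (hd : 2 < deg G (v 0)) {w : V} (hw : G.Adj (v 0) w)
    (hwv : w ≠ v 1) (S : Finset V) (hc : c ≤ S.card) (hS : ∀ a ∈ S, Conn G w (v 0) a) :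
    Reach P H G (10 * (c * Fintype.card V)) S w ∅ (v L) := by
  have hp : IsP G (consP w v) (L + 1) := h.cons hG hw.symm fun _ => hwv
  have r2 := hp.caterpillar (P := P) (H := H) hG h1 h2 (L + 1) (by omega) hd
  have hQ : ((Icc 1 (min c (L + 1))).image (consP w v)).card ≤ c :=
    card_image_le.trans (by simp)
  have r1 := Reach.gatherAll (P := P) (H := H) (G := G) (x := w) S
    ((Icc 1 (min c (L + 1))).image (consP w v)) (hQ.trans hc) (by
      intro a ha b hb
      obtain ⟨i, hi, rfl⟩ := mem_image.mp hb
      rw [mem_Icc] at hi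
      refine (hS a ha).symm.trans ?_
      refine hp.conn (a := 1) (b := i) (by omega) (by omega) fun j hj hj' e => ?_
      have := hp.inj j 0 (by omega) (by omega) e
      omega)
  refine (r1.trans r2).mono ?_ subset_rfl subset_rfl
  have e1 := Nat.mul_le_mul_right (Fintype.card V) hQ
  have e2 := Nat.mul_le_mul_left (9 * c) hp.lt_card.le
  nlinarith

/-- A hole is brought next to the marked pebble, within its own branch. -/
theorem Reach.bring {x y a : V} {S : Finset V} (hx : x ∉ S) (ha : a ∈ S) (h : Conn G x y a) :
    ∃ S', Reach P H G (Fintype.card V) S x S' x ∧ y ∈ S' ∧ S'.card = S.card ∧ x ∉ S' ∧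
      ∀ z ∈ S, z ≠ a → z ∈ S' := by
  by_cases hy : y ∈ S
  · exact ⟨S, Reach.drop subset_rfl, hy, rfl, hx,
      fun z hz _ => hz⟩
  · refine ⟨insert y (S.erase a), Reach.transfer' h.symm S ha hy, mem_insert_self _ _, ?_, ?_, ?_⟩
    · rw [card_insert_of_notMem (by simp [hy]), card_erase_of_mem ha]
      have := card_pos.mpr ⟨a, ha⟩
      omega
    · simp [hx, h.ne_left.symm]
    · intro z hz hza
      simp [hz, hza]

theorem Reach.bringTwo (hG : G.IsTree) {x y z a b : V} {S : Finset V} (hx : x ∉ S) (ha : a ∈ S)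
    (hb : b ∈ S) (hy : G.Adj x y) (hz : G.Adj x z) (hyz : y ≠ z) (hya : Conn G x y a)
    (hzb : Conn G x z b) :
    ∃ S', Reach P H G (2 * Fintype.card V) S x S' x ∧ y ∈ S' ∧ z ∈ S' ∧ S'.card = S.card ∧
      x ∉ S' := by
  obtain ⟨S₁, r1, h1, h2, h3, h4⟩ := Reach.bring (P := P) (H := H) hx ha hya
  have hba : b ≠ a := by
    rintro rfl
    exact hyz (adj_unique hG hy hz (hya.trans hzb.symm))
  have hyb : y ≠ b := by
    rintro rfl
    exact hyz (adj_unique hG hy hz hzb.symm)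
  obtain ⟨S₂, r2, g1, g2, g3, g4⟩ := Reach.bring (P := P) (H := H) h3 (h4 b hb hba) hzb
  exact ⟨S₂, (r1.trans r2).mono (by omega) subset_rfl subset_rfl, g4 y h1 hyb, g1,
    g2.trans h2, g3⟩

end Motion

end PMT

/-! ### Starting the motion -/

namespace PMT

section Start

open Finset

variable {V P H : Type} {G : SimpleGraph V} [Fintype V] [DecidableEq V]

/-- The marked pebble stands on a junction `v 0` with holes on two neighbours `w` and `w'`, neither
of which lies on the path `v` to be followed. It steps to `w`. If too few holes are accessible from
the junction for `IsP.launch`, the other holes lie behind `w`; the accessible ones are then lined up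
on `w'` and the beginning of the path, and the pebble goes on to `w'`, behind which no tracked hole
is left. -/
theorem IsP.twoSteps (hG : G.IsTree) {c : ℕ} (h1 : c1 G + 1 ≤ c) (h2 : c2 G + 2 ≤ c) {L : ℕ}
    {v : ℕ → V} (h : IsP G v L) (hd : 2 < deg G (v 0)) {w w' : V} (hw : G.Adj (v 0) w)
    (hw' : G.Adj (v 0) w') (hne : w ≠ w') (hwv : w ≠ v 1) (hwv' : w' ≠ v 1) (S : Finset V)
    (hc : S.card = c) (hwS : w ∈ S) (hwS' : w' ∈ S) (hvS : v 0 ∉ S) :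
    Reach P H G (14 * (c * Fintype.card V)) S (v 0) ∅ (v L) := by
  classical
  have hn : 1 ≤ Fintype.card V := Fintype.card_pos_iff.mpr ⟨w⟩
  have hX : Fintype.card V ≤ c * Fintype.card V := Nat.le_mul_of_pos_left _ (by omega)
  have hp : IsP G (consP w v) (L + 1) := h.cons hG hw.symm fun _ => hwv
  have hp' : IsP G (consP w' v) (L + 1) := h.cons hG hw'.symm fun _ => hwv'
  have hoff : ∀ i ≤ L, v i ≠ w := fun i hi e => by
    have := hp.inj (i + 1) 0 (by omega) (by omega) e
    omega
  have hoff' : ∀ i ≤ L, v i ≠ w' := fun i hi e => by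
    have := hp'.inj (i + 1) 0 (by omega) (by omega) e
    omega
  set S₁ := insert (v 0) (S.erase w) with hS₁
  have hS₁c : S₁.card = c := by
    rw [hS₁, card_insert_of_notMem (by simp [hvS]), card_erase_of_mem hwS, hc]
    omega
  have r1 : Reach P H G 1 S (v 0) S₁ w := Reach.step hw hwS
  -- `A` holds the accessible holes, `R` those behind `w`
  set A := S₁.filter (Conn G w (v 0)) with hA
  set R := S₁.filter (fun a => ¬ Conn G w (v 0) a) with hR
  have hAR : R ∪ A = S₁ := by
    rw [union_comm]; exact filter_union_filter_not_eq _ _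
  have hARc : A.card + R.card = c := by
    rw [← hS₁c]; exact card_filter_add_card_filter_not _
  have hJA : v 0 ∈ A := mem_filter.mpr ⟨mem_insert_self _ _, Conn.refl hw.ne⟩
  have hwA' : w' ∈ A := mem_filter.mpr ⟨by simp [hS₁, hwS', hne.symm],
    conn_of_branch hG hw hw' hne (Conn.refl hw'.ne')⟩
  have hk2 : 2 ≤ A.card := by
    rw [← card_pair hw'.ne]
    exact card_le_card (by intro z hz; rw [mem_insert, mem_singleton] at hz; rcases hz with rfl | rfl
                           exacts [hJA, hwA'])
  have hvc : ∀ i ≤ L, Conn G w (v 0) (v i) := fun i hi =>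
    h.conn (a := 0) (by omega) hi fun j _ hj => hoff j (by simp at hj; omega)
  have hvc' : ∀ i ≤ L, Conn G w' (v 0) (v i) := fun i hi =>
    h.conn (a := 0) (by omega) hi fun j _ hj => hoff' j (by simp at hj; omega)
  rcases Nat.lt_or_ge A.card c with hkc | hkc
  swap
  · have r2 := h.launch (P := P) (H := H) hG h1 h2 hd hw hwv A hkc fun a ha => (mem_filter.mp ha).2
    refine (r1.trans (r2.mono le_rfl (filter_subset _ _) subset_rfl)).mono ?_ subset_rfl subset_rfl
    omega
  rcases Nat.lt_or_ge A.card (L + 1) with hkM | hkM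
  swap
  · -- enough accessible holes to clear the whole path
    have hQ : ((Icc 1 (L + 1)).image (consP w v)).card ≤ L + 1 := card_image_le.trans (by simp)
    have r2 := Reach.gatherAll (P := P) (H := H) (G := G) (x := w) A
      ((Icc 1 (L + 1)).image (consP w v)) (hQ.trans hkM) (by
        intro a ha b hb
        obtain ⟨i, hi, rfl⟩ := mem_image.mp hb
        rw [mem_Icc] at hi
        obtain ⟨j, rfl⟩ : ∃ j, i = j + 1 := ⟨i - 1, by omega⟩
        exact (mem_filter.mp ha).2.symm.trans (hvc j (by omega)))
    have r3 := hp.reach (P := P) (H := H) (L + 1) le_rfl _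
      fun i hi hi' => mem_image_of_mem _ (mem_Icc.mpr ⟨hi, hi'⟩)
    refine ((r1.trans (r2.mono le_rfl (filter_subset _ _) subset_rfl)).trans
      (r3.mono le_rfl subset_rfl (empty_subset _))).mono ?_ subset_rfl subset_rfl
    have e1 := Nat.mul_le_mul_right (Fintype.card V) ((hQ.trans hkM).trans hkc.le)
    have e2 := hp.lt_card
    omega
  · set T := (range (A.card - 1)).image v with hT
    have hTL : ∀ z ∈ T, ∃ i ≤ L, v i = z ∧ i + 1 < A.card := by
      intro z hz
      obtain ⟨i, hi, rfl⟩ := mem_image.mp hz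
      rw [mem_range] at hi
      exact ⟨i, by omega, rfl, by omega⟩
    have hTc : T.card = A.card - 1 := by
      rw [hT, card_image_of_injOn, card_range]
      intro i hi j hj e
      simp only [coe_range, Set.mem_Iio] at hi hj
      exact h.inj i j (by omega) (by omega) e
    have hwT' : w' ∉ T := fun hm => by
      obtain ⟨i, hi, e, -⟩ := hTL _ hm
      exact hoff' i hi e
    have hwT : w ∉ T := fun hm => by
      obtain ⟨i, hi, e, -⟩ := hTL _ hm
      exact hoff i hi e
    have hQc : ∀ b ∈ insert w' T, Conn G w (v 0) b := by
      intro b hb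
      rcases mem_insert.mp hb with rfl | hb
      · exact (mem_filter.mp hwA').2
      · obtain ⟨i, hi, rfl, -⟩ := hTL _ hb
        exact hvc i hi
    have hRQ : Disjoint R (insert w' T) :=
      disjoint_left.mpr fun a ha hb => (mem_filter.mp ha).2 (hQc a hb)
    have hQcard : (insert w' T).card = A.card := by
      rw [card_insert_of_notMem hwT', hTc]
      omega
    have r2 := Reach.gather (P := P) (H := H) (G := G) (x := w) R _ A (insert w' T) rfl
      (disjoint_filter_filter_not _ _ _).symm hRQ hQcard.symm
      (fun a ha b hb => (mem_filter.mp ha).2.symm.trans (hQc b hb))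
    rw [hAR] at r2
    have hJT : v 0 ∈ T := mem_image_of_mem _ (mem_range.mpr (by omega))
    have r3 : Reach P H G 1 (R ∪ insert w' T) w
        (insert w ((R ∪ insert w' T).erase (v 0))) (v 0) := Reach.step hw.symm (by simp [hJT])
    have r4 : Reach P H G 1 (insert w ((R ∪ insert w' T).erase (v 0))) (v 0)
        (insert (v 0) ((insert w ((R ∪ insert w' T).erase (v 0))).erase w')) w' :=
      Reach.step hw' (by simp [hw'.ne'])
    have hwR : w ∉ R := fun hm => by
      have := (mem_filter.mp hm).1
      simp [hS₁, hw.ne'] at this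
    have hRT : Disjoint R T := hRQ.mono_right (subset_insert _ _)
    have r5 := h.launch (P := P) (H := H) hG h1 h2 hd hw' hwv' (insert w (R ∪ T)) (by
        rw [card_insert_of_notMem (by simp [hwR, hwT]), card_union_of_disjoint hRT, hTc]
        omega) (by
      intro a ha
      simp only [mem_insert, mem_union] at ha
      rcases ha with rfl | ha | ha
      · exact conn_of_branch hG hw' hw hne.symm (Conn.refl hw.ne')
      · have ha2 := (mem_filter.mp ha).2
        have haJ : a ≠ v 0 := by
          rintro rfl
          exact ha2 (mem_filter.mp hJA).2
        obtain ⟨z, hz, hza⟩ := exists_branch hG haJ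
        by_cases hzw : w = z
        · subst hzw
          exact conn_of_branch hG hw' hz hne.symm hza
        · exact absurd (conn_of_branch hG hw hz hzw hza) ha2
      · obtain ⟨i, hi, rfl, -⟩ := hTL _ ha
        exact hvc' i hi)
    refine ((((r1.trans r2).trans r3).trans r4).trans (r5.mono le_rfl ?_ subset_rfl)).mono ?_
      subset_rfl subset_rfl
    · intro z hz
      have : z ∈ R → z ≠ w' := by
        rintro hz rfl
        exact disjoint_left.mp hRQ hz (mem_insert_self _ _)
      simp only [mem_insert, mem_union, mem_erase] at hz ⊢
      grind
    · have e1 : ((insert w' T) \ A).card ≤ c :=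
        (card_le_card sdiff_subset).trans (hQcard.le.trans hkc.le)
      have e2 := Nat.mul_le_mul_right (Fintype.card V) e1
      omega

/-- From a junction `J` with holes on two of its neighbours, every vertex can be reached. -/
theorem Reach.of_junction (hG : G.IsTree) {c : ℕ} (h1 : c1 G + 1 ≤ c) (h2 : c2 G + 2 ≤ c)
    {J α β : V} {S : Finset V} (hd : 2 < deg G J) (hc : S.card = c) (hJ : J ∉ S) (hα : α ∈ S)
    (hβ : β ∈ S) (hJα : G.Adj J α) (hJβ : G.Adj J β) (hαβ : α ≠ β) (t : V) :
    Reach P H G (16 * (c * Fintype.card V)) S J ∅ t := by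
  have hn : 1 ≤ Fintype.card V := Fintype.card_pos_iff.mpr ⟨J⟩
  have hX : Fintype.card V ≤ c * Fintype.card V := Nat.le_mul_of_pos_left _ (by omega)
  obtain ⟨v, L, hv, rfl, rfl⟩ := exists_isP hG J t
  by_cases hγ : ∃ γ, G.Adj (v 0) γ ∧ γ ≠ v 1 ∧ ∀ a ∈ S, ¬ Conn G (v 0) γ a
  · -- the hole on `β` is moved to the empty branch `γ` while the pebble waits on `α`
    obtain ⟨γ, hJγ, hγv, hγS⟩ := hγ
    have hγS' : γ ∉ S := fun hm => hγS γ hm (Conn.refl hJγ.ne')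
    have hγα : γ ≠ α := fun e => hγS' (e ▸ hα)
    have r1 : Reach P H G 1 S (v 0) (insert (v 0) (S.erase α)) α := Reach.step hJα hα
    have r2 : Reach P H G 1 (insert (v 0) (S.erase α)) α
        (insert γ ((insert (v 0) (S.erase α)).erase (v 0))) α :=
      Reach.other hJγ.symm (mem_insert_self _ _) hγα
    have r3 : Reach P H G 1 (insert γ ((insert (v 0) (S.erase α)).erase (v 0))) α
        (insert (v 0) ((insert γ ((insert (v 0) (S.erase α)).erase (v 0))).erase β)) α :=
      Reach.other hJβ (by simp [hβ, hJβ.ne', hαβ.symm]) hJα.ne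
    have r4 := Reach.step (P := P) (H := H) (G := G)
      (S := insert (v 0) ((insert γ ((insert (v 0) (S.erase α)).erase (v 0))).erase β))
      hJα.symm (mem_insert_self _ _)
    have hγβ : γ ≠ β := fun e => hγS' (e ▸ hβ)
    have r5 := Reach.step (P := P) (H := H) (G := G) (S := insert α ((insert (v 0)
      ((insert γ ((insert (v 0) (S.erase α)).erase (v 0))).erase β)).erase (v 0)))
      hJγ (by simp [hγβ, hJγ.ne'])
    have r6 := hv.launch (P := P) (H := H) hG h1 h2 hd hJγ hγv (insert (v 0) (S.erase β)) (by
      rw [card_insert_of_notMem (by simp [hJ]), card_erase_of_mem hβ, hc]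
      omega) (by
      intro a ha
      rw [mem_insert, mem_erase] at ha
      rcases ha with rfl | ⟨-, ha⟩
      · exact Conn.refl hJγ.ne
      · obtain ⟨z, hz, hza⟩ := exists_branch hG (x := v 0) (a := a) (fun e => hJ (e ▸ ha))
        refine conn_of_branch hG hJγ hz ?_ hza
        rintro rfl
        exact hγS a ha hza)
    refine (((((r1.trans r2).trans r3).trans r4).trans r5).trans
      (r6.mono le_rfl ?_ subset_rfl)).mono (by omega) subset_rfl subset_rfl
    intro z hz
    simp only [mem_insert, mem_erase] at hz ⊢
    grind
  · -- every branch off the path holds a hole, so two of them can supply the holes `w` and `w'`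
    push Not at hγ
    obtain ⟨w, hw, hwv, -⟩ := exists_adj_ne_ne hd (v 1) (v 1)
    obtain ⟨w', hw', hwv', hne⟩ := exists_adj_ne_ne hd (v 1) w
    obtain ⟨a, ha, hwa⟩ := hγ w hw hwv
    obtain ⟨a', ha', hwa'⟩ := hγ w' hw' hwv'
    obtain ⟨S', r1, g1, g2, g3, g4⟩ := Reach.bringTwo (P := P) (H := H) hG hJ ha ha' hw hw' hne.symm
      hwa hwa'
    have r2 := hv.twoSteps (P := P) (H := H) hG h1 h2 hd hw hw' hne.symm hwv hwv' S' (g3.trans hc)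
      g1 g2 g4
    exact (r1.trans r2).mono (by omega) subset_rfl subset_rfl

/-- If the branch entered by a path from the marked pebble to the next vertex of degree other
than 2 holds more holes than the length `d` of that path, the path ends in a junction: otherwise
the branch would consist of the path only. Holes are lined up on the path and on one more
neighbour of the junction, and the pebble walks to the junction. -/
theorem IsP.toJunction (hG : G.IsTree) {c : ℕ} (h1 : c1 G + 1 ≤ c) (h2 : c2 G + 2 ≤ c) {d : ℕ}
    {p : ℕ → V} (h : IsP G p d) (hd1 : 1 ≤ d) (hi : ∀ i, 0 < i → i < d → deg G (p i) = 2)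
    (hd : deg G (p d) ≠ 2) {S : Finset V} (hc : S.card = c) (hp : p 0 ∉ S) (F : Finset V)
    (hFS : ∀ a, a ∈ F ↔ a ∈ S ∧ Conn G (p 0) (p 1) a) (hF : d < F.card) (t : V) :
    Reach P H G (18 * (c * Fintype.card V)) S (p 0) ∅ t := by
  have hn : 1 ≤ Fintype.card V := Fintype.card_pos_iff.mpr ⟨p 0⟩
  have hX : Fintype.card V ≤ c * Fintype.card V := Nat.le_mul_of_pos_left _ (by omega)
  have hadj : ∀ i, 1 ≤ i → i ≤ d → G.Adj (p i) (p (i - 1)) := fun i hi hid => by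
    have := h.adj (i - 1) (by omega)
    rw [show i - 1 + 1 = i by omega] at this
    exact this.symm
  have hJ : 2 < deg G (p d) := by
    by_contra hJ
    -- a walk avoiding `p 0` cannot leave the path if `p d` is a leaf
    have hcl : ∀ a b : V, ∀ q : G.Walk a b, p 0 ∉ q.support → (∃ i, 1 ≤ i ∧ i ≤ d ∧ p i = a) →
        ∃ i, 1 ≤ i ∧ i ≤ d ∧ p i = b := by
      intro a b q
      induction q with
      | nil => exact fun _ h => h
      | @cons a y b hay q ih =>
        rintro hq ⟨i, hi1, hid, rfl⟩
        simp only [SimpleGraph.Walk.support_cons, List.mem_cons, not_or] at hq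
        have hy0 : y ≠ p 0 := fun e => hq.2 (e ▸ q.start_mem_support)
        refine ih hq.2 ?_
        have key : y ≠ p (i - 1) → i < d ∧ y = p (i + 1) := by
          intro hy
          rcases Nat.lt_or_ge i d with hlt | hge
          · refine ⟨hlt, ?_⟩
            refine (eq_of_deg_two (hi i hi1 hlt) (hadj i hi1 hid) (h.adj i hlt) ?_
              hay).resolve_left hy
            intro e
            have := h.inj (i - 1) (i + 1) (by omega) (by omega) e
            omega
          · obtain rfl : i = d := by omega
            have := two_le_deg (hadj i hi1 hid) hay hy.symm
            omega
        by_cases hy : y = p (i - 1)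
        · refine ⟨i - 1, ?_, by omega, hy.symm⟩
          by_contra h0
          exact hy0 (by rw [hy, show i - 1 = 0 by omega])
        · obtain ⟨hlt, e⟩ := key hy
          exact ⟨i + 1, by omega, by omega, e.symm⟩
    have hsub : F ⊆ (Icc 1 d).image p := by
      intro a ha
      obtain ⟨q, hq⟩ := ((hFS a).mp ha).2
      obtain ⟨i, hi1, hid, e⟩ := hcl _ _ q hq ⟨1, le_rfl, hd1, rfl⟩
      exact mem_image.mpr ⟨i, mem_Icc.mpr ⟨hi1, hid⟩, e⟩
    have := (card_le_card hsub).trans card_image_le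
    simp at this
    omega
  obtain ⟨z, hz, hzp, -⟩ := exists_adj_ne_ne hJ (p (d - 1)) (p (d - 1))
  have hs := h.snoc hG hd1 hz hzp
  set p' : ℕ → V := fun i => if i ≤ d then p i else z with hp'
  have hpp : ∀ i ≤ d, p' i = p i := fun i hi => if_pos hi
  have hpz : p' (d + 1) = z := if_neg (by omega)
  have hconn : ∀ i, 1 ≤ i → i ≤ d + 1 → Conn G (p 0) (p 1) (p' i) := by
    intro i hi1 hid
    rw [← hpp 1 hd1, ← hpp 0 (by omega)]
    refine hs.conn (by omega) hid fun j hj hj' e => ?_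
    have := hs.inj j 0 (by simp at hj'; omega) (by omega) e
    simp at hj
    omega
  have hzconn : Conn G (p 0) (p 1) z := hpz ▸ hconn (d + 1) (by omega) le_rfl
  have hQc : ((Icc 1 (d + 1)).image p').card ≤ F.card := by
    refine card_image_le.trans ?_
    simp
    omega
  obtain ⟨Q, hQ1, hQ2, hQ3⟩ := exists_subsuperset_card_eq
    (subset_union_left (s₁ := (Icc 1 (d + 1)).image p') (s₂ := F)) hQc
    (card_le_card subset_union_right)
  have hQconn : ∀ b ∈ Q, Conn G (p 0) (p 1) b := by
    intro b hb
    rcases mem_union.mp (hQ2 hb) with hb | hb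
    · obtain ⟨i, hi, rfl⟩ := mem_image.mp hb
      rw [mem_Icc] at hi
      exact hconn i hi.1 hi.2
    · exact ((hFS b).mp hb).2
  have hFsub : F ⊆ S := fun a ha => ((hFS a).mp ha).1
  have hdisj : Disjoint (S \ F) Q := disjoint_left.mpr fun a ha hb => by
    rw [mem_sdiff] at ha
    exact ha.2 ((hFS a).mpr ⟨ha.1, hQconn a hb⟩)
  have r1 := Reach.gather (P := P) (H := H) (G := G) (x := p 0) (S \ F) _ F Q rfl
    sdiff_disjoint hdisj hQ3.symm
    (fun a ha b hb => ((hFS a).mp ha).2.symm.trans (hQconn b hb))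
  rw [sdiff_union_of_subset hFsub] at r1
  have hmem : ∀ i, 1 ≤ i → i ≤ d + 1 → p' i ∈ Q := fun i hi1 hid =>
    hQ1 (mem_image_of_mem _ (mem_Icc.mpr ⟨hi1, hid⟩))
  have hpd : p d ∈ Q := hpp d le_rfl ▸ hmem d hd1 (by omega)
  have hzQ : z ∈ Q := hpz ▸ hmem (d + 1) (by omega) le_rfl
  have r2 := h.reach (P := P) (H := H) d le_rfl (S \ F ∪ Q) fun i hi1 hid =>
    mem_union_right _ (hpp i hid ▸ hmem i hi1 (by omega))
  have hp0 : p 0 ∉ S \ F ∪ Q := by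
    rw [mem_union, mem_sdiff]
    rintro (h' | h')
    · exact hp h'.1
    · exact (hQconn _ h').ne_right rfl
  have hcard : (S \ F ∪ Q).card = c := by
    rw [card_union_of_disjoint hdisj, hQ3, card_sdiff_add_card_eq_card hFsub, hc]
  have hpred : p (d - 1) ∈ insert (p 0) (S \ F ∪ Q) := by
    rcases Nat.eq_zero_or_pos (d - 1) with h0 | h0
    · rw [h0]
      exact mem_insert_self _ _
    · exact mem_insert_of_mem (mem_union_right _
        (hpp (d - 1) (by omega) ▸ hmem (d - 1) h0 (by omega)))
  have r3 := Reach.of_junction (P := P) (H := H) hG h1 h2 (J := p d) (α := p (d - 1)) (β := z)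
    (S := (insert (p 0) (S \ F ∪ Q)).erase (p d)) hJ (by
      rw [card_erase_of_mem (mem_insert_of_mem (mem_union_right _ hpd)),
        card_insert_of_notMem hp0, hcard, Nat.add_sub_cancel])
    (by simp) (mem_erase.mpr ⟨(hadj d hd1 le_rfl).ne', hpred⟩)
    (mem_erase.mpr ⟨hz.ne', mem_insert_of_mem (mem_union_right _ hzQ)⟩)
    (hadj d hd1 le_rfl) hz hzp.symm t
  refine ((r1.trans r2).trans r3).mono ?_ subset_rfl subset_rfl
  have e1 : (Q \ F).card ≤ c :=
    (card_le_card sdiff_subset).trans (hQ3.le.trans ((card_le_card hFsub).trans hc.le))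
  have e2 := Nat.mul_le_mul_right (Fintype.card V) e1
  have e3 := h.lt_card
  omega

/-- With `c` holes anywhere, the marked pebble can be brought from any vertex to any other. It
suffices to find a branch with more holes than the distance to the next vertex of degree other
than 2, or a junction under the pebble with holes in two branches. -/
theorem Reach.of_card (hG : G.IsTree) {c : ℕ} (h1 : c1 G + 1 ≤ c) (h2 : c2 G + 2 ≤ c)
    {x : V} {S : Finset V} (hc : S.card = c) (hx : x ∉ S) (t : V) :
    Reach P H G (18 * (c * Fintype.card V)) S x ∅ t := by
  classical
  obtain ⟨a, ha⟩ := card_pos.mp (show 0 < S.card by omega)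
  have hne : ∀ a ∈ S, a ≠ x := fun a ha e => hx (e ▸ ha)
  obtain ⟨y, hy, hya⟩ := exists_branch hG (hne a ha)
  have hP : ∀ y, G.Adj x y → IsP G (consP x fun _ => y) 1 := by
    intro y hy
    refine ⟨fun i hi => ?_, fun i j hi hj e => ?_⟩
    · obtain rfl : i = 0 := by omega
      exact hy
    · have : x ≠ y := hy.ne
      interval_cases i <;> interval_cases j <;> simp_all [consP]
  obtain ⟨p, d, hd1, hp, hp0, hd, hi⟩ := (hP y hy).extend hG le_rfl (by omega)
  obtain rfl : x = p 0 := (hp0 0 (by omega)).symm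
  obtain rfl : y = p 1 := (hp0 1 (by omega)).symm
  by_cases hdx : deg G (p 0) = 2
  · obtain ⟨z, hz, hzy⟩ := exists_adj_ne hdx.ge (p 1)
    -- the corridor through the marked pebble: `p` reversed, prolonged through `z`
    have hrev : IsP G (fun i => if i ≤ d then p (d - i) else z) (d + 1) :=
      hp.reverse.snoc hG hd1 (by simpa using hz) (by
        simpa [show d - (d - 1) = 1 by omega] using hzy)
    obtain ⟨q, m, hm, hq, hq0, hqm, hqi⟩ := hrev.extend hG (by omega) (by
      intro i hi0 hid
      simp only [show i ≤ d by omega, if_true]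
      rcases Nat.lt_or_ge i d with h' | h'
      · exact hi (d - i) (by omega) (by omega)
      · rwa [show d - i = 0 by omega])
    have hqd : q d = p 0 := by simp [hq0 d (by omega)]
    have hqd1 : q (d + 1) = z := by simp [hq0 (d + 1) le_rfl]
    have hlen := hq.le_c1 (by omega) (by simpa [hq0 0 (by omega)] using hd) hqm hqi
    have hcount : S.card ≤ (S.filter (Conn G (p 0) (p 1))).card
        + (S.filter (Conn G (p 0) z)).card := by
      refine (card_le_card fun a ha => ?_).trans (card_union_le _ _)
      obtain ⟨y', hy', hya'⟩ := exists_branch hG (hne a ha)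
      rcases eq_of_deg_two hdx hy hz hzy.symm hy' with rfl | rfl
      · exact mem_union_left _ (mem_filter.mpr ⟨ha, hya'⟩)
      · exact mem_union_right _ (mem_filter.mpr ⟨ha, hya'⟩)
    by_cases hlt : d < (S.filter (Conn G (p 0) (p 1))).card
    · exact hp.toJunction hG h1 h2 hd1 hi hd hc hx _ (fun a => mem_filter) hlt t
    · -- the corridor has length `m ≤ c - 1`, so the other branch has more than `m - d` holes
      have hs := hq.shift d (by omega)
      have := hs.toJunction (P := P) (H := H) hG h1 h2 (by omega)
        (fun i hi0 hid => hqi (i + d) (by omega) (by omega))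
        (by rwa [show m - d + d = m by omega]) hc (by rwa [zero_add, hqd])
        (S.filter (Conn G (p 0) z)) (fun a => by rw [mem_filter, zero_add, add_comm 1, hqd, hqd1])
        (by omega) t
      rwa [zero_add, hqd] at this
  · by_cases hall : ∀ b ∈ S, Conn G (p 0) (p 1) b
    · refine hp.toJunction hG h1 h2 hd1 hi hd hc hx S (fun b => ⟨fun hb => ⟨hb, hall b hb⟩,
        fun hb => hb.1⟩) ?_ t
      have := hp.le_c1 hd1 hdx hd hi
      omega
    · push Not at hall
      obtain ⟨b, hb, hbn⟩ := hall
      obtain ⟨z, hz, hzb⟩ := exists_branch hG (hne b hb)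
      have hyz : p 1 ≠ z := by
        intro e
        rw [← e] at hzb
        exact hbn hzb
      have hJ := two_le_deg hy hz hyz
      obtain ⟨S', r1, g1, g2, g3, g4⟩ := Reach.bringTwo (P := P) (H := H) hG hx ha hb hy hz hyz
        hya hzb
      have r2 := Reach.of_junction (P := P) (H := H) hG h1 h2 (by omega) (g3.trans hc) g4 g1 g2
        hy hz hyz t
      have hX : Fintype.card V ≤ c * Fintype.card V := Nat.le_mul_of_pos_left _ (by omega)
      exact (r1.trans r2).mono (by omega) subset_rfl subset_rfl

end Start

end PMT

/-! ### Procedure B -/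

/-- Procedure B (Case B of the CATERPILLAR algorithm): if the component of
`T − r` containing `t` has fewer than `c(T)` holes, the marked pebble can still be brought
to `t` in at most `C·n·c(T)` moves, for a universal constant `C`. -/
theorem procedure_B :
    ∃ C : ℕ, 0 < C ∧
      ∀ (V P H : Type) [Fintype V] [Fintype P] [Fintype H] (G : SimpleGraph V),
        G.IsTree →
        Fintype.card V = Fintype.card P + Fintype.card H →
        PMT.cT G ≤ Fintype.card H →
        ∀ (A : PMT.Config P H V) (pb : P) (t : V),
          t ≠ A (Sum.inl pb) →
          PMT.holesInComp G A (A (Sum.inl pb)) t < PMT.cT G →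
          ∃ (f : List (V × V)) (B : PMT.Config P H V),
            PMT.applyPlan G A f = some B ∧
            f.length ≤ C * Fintype.card V * PMT.cT G ∧
            B (Sum.inl pb) = t := by
  classical
  refine ⟨18, by norm_num, ?_⟩
  intro V P H _ _ _ G hG hcard hH A pb t ht _
  set x := A (Sum.inl pb) with hx
  have hn : 2 ≤ Fintype.card V := Fintype.one_lt_card_iff.mpr ⟨t, x, ht⟩
  by_cases hpath : PMT.IsPathGraph G
  · -- every vertex except that of the marked pebble is a hole
    have hle := PMT.card_le_c1_of_isPathGraph hG hpath hn
    rw [PMT.cT, if_pos hpath] at hH ⊢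
    obtain ⟨v, L, hv, hv0, hvL⟩ := PMT.exists_isP hG x t
    have hall : ∀ z, z ≠ x → (A.symm z).isRight = true := by
      intro z hz
      rcases e : A.symm z with q | q
      · have : Subsingleton P := Fintype.card_le_one_iff_subsingleton.mp (by omega)
        obtain rfl : q = pb := Subsingleton.elim _ _
        exact absurd ((Equiv.symm_apply_eq A).mp e) hz
      · rfl
    have r := hv.reach (P := P) (H := H) L le_rfl (Finset.univ.erase x) (fun i hi hi' => by
      refine Finset.mem_erase.mpr ⟨fun e => ?_, Finset.mem_univ _⟩
      have := hv.inj i 0 hi' (Nat.zero_le _) (e.trans hv0.symm)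
      omega)
    obtain ⟨f, B, hf, hl, hB, -⟩ := r A pb (hx.symm.trans hv0.symm)
      (fun z hz => hall z (Finset.ne_of_mem_erase hz))
    refine ⟨f, B, hf, ?_, hB.trans hvL⟩
    have hlt := hv.lt_card
    have hc1 : 1 ≤ PMT.c1 G := by omega
    nlinarith
  · have hcT : PMT.cT G = max (PMT.c1 G + 1) (PMT.c2 G + 2) := if_neg hpath
    have hAH : (Finset.univ.image fun h : H => A (Sum.inr h)).card = Fintype.card H :=
      Finset.card_image_of_injective _ (A.injective.comp Sum.inr_injective)
    -- only `c(T)` of the holes are used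
    obtain ⟨S, hS, hSc⟩ := Finset.exists_subset_card_eq (hH.trans hAH.ge)
    have hSh : ∀ v ∈ S, (A.symm v).isRight = true := by
      intro v hv
      obtain ⟨h, -, rfl⟩ := Finset.mem_image.mp (hS hv)
      simp
    have r := PMT.Reach.of_card (P := P) (H := H) hG (c := PMT.cT G)
      (hcT ▸ le_max_left _ _) (hcT ▸ le_max_right _ _) hSc (x := x) (fun hm => by
        have := hSh x hm
        simp [hx] at this) t
    obtain ⟨f, B, hf, hl, hB, -⟩ := r A pb rfl hSh
    exact ⟨f, B, hf, hl.trans (le_of_eq (by ring)), hB⟩
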